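/- Let n ≥ 1 and N = {1,…,n}. Let α_j, β_j ∈ ℤ satisfy 0 ≤ α_j ≤ β_j for each j ∈ N, let g : ∏_{j∈N} [α_j, β_j] → ℂ be a smooth function, and let a : ℤ_{≥0}ⁿ → ℂ. Then ∑_{m₁=α₁}^{β₁} ⋯ ∑_{m_n=α_n}^{β_n} g(m₁,…,m_n) a(m₁,…,m_n) = (−1)ⁿ ∑_{A ⊆ N} ∑_{B ⊆ N∖A} (−1)^{|B|} ∫_{∏_{j∈A} [α_j, β_j]} g_{A,B}(x) S_{A,B}(x) dx, where for A = ∅ the integral is interpreted as the single value g_{∅,B} S_{∅,B}. -/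

import Mathlib

open MeasureTheory

noncomputable section

/-- One-variable partial derivative (within the interval `[c,d]`) of a function on `ℝⁿ`,
in the `j`-th coordinate. -/
def pderivI {n : ℕ} (c d : ℝ) (j : Fin n) (f : (Fin n → ℝ) → ℂ) : (Fin n → ℝ) → ℂ :=
  fun x => derivWithin (fun t => f (Function.update x j t)) (Set.Icc c d) (x j)

/-- Mixed partial derivative `∂^{|A|}/∂x_{i₁}⋯∂x_{i_{|A|}}` in the coordinates of `A`,
each taken within the corresponding interval `[α j, β j]`. -/
def mixedDeriv {n : ℕ} (α β : Fin n → ℝ) (A : Finset (Fin n))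
    (f : (Fin n → ℝ) → ℂ) : (Fin n → ℝ) → ℂ :=
  (A.sort (· ≤ ·)).foldr (fun j F => pderivI (α j) (β j) j F) f

/-- The embedding `I_{A,B}` (resp. `Ĩ_{A,B}` when `α` is replaced by `α - 1`):
coordinates in `A` are free, coordinates in `B` are set to `β`, the remaining
coordinates are set to `α`. -/
def embedI {n : ℕ} (α β : Fin n → ℝ) (A B : Finset (Fin n)) (x : Fin n → ℝ) :
    Fin n → ℝ :=
  fun j => if j ∈ A then x j else if j ∈ B then β j else α j

/-- `S(X₁,…,X_n) = ∑_{0 ≤ m₁ ≤ X₁} ⋯ ∑_{0 ≤ m_n ≤ X_n} a(m₁,…,m_n)` (empty ranges give `0`). -/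
def partialSum {n : ℕ} (a : (Fin n → ℕ) → ℂ) (X : Fin n → ℝ) : ℂ :=
  ∑ m ∈ Fintype.piFinset (fun j => Finset.range (⌊X j⌋ + 1).toNat), a m

/-- Extension of a vector indexed by `A` to a vector indexed by `Fin n` (by `0`). -/
def extendA {n : ℕ} (A : Finset (Fin n)) (x : {j // j ∈ A} → ℝ) : Fin n → ℝ :=
  fun j => if h : j ∈ A then x ⟨j, h⟩ else 0


/-- cylinder over the box in the coordinates of `T` -/
def cyl {n : ℕ} (α β : Fin n → ℝ) (T : Finset (Fin n)) : Set (Fin n → ℝ) :=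
  (T : Set (Fin n)).pi (fun j => Set.Icc (α j) (β j))

lemma cyl_uniqueDiffOn {n : ℕ} (α β : Fin n → ℝ) (T : Finset (Fin n))
    (hT : ∀ j ∈ T, α j < β j) : UniqueDiffOn ℝ (cyl α β T) :=
  UniqueDiffOn.pi fun j hj => uniqueDiffOn_Icc (hT j hj)

lemma update_mem_cyl' {n : ℕ} {α β : Fin n → ℝ} {T : Finset (Fin n)} {x : Fin n → ℝ}
    {j : Fin n} (hx : ∀ i ∈ T, i ≠ j → x i ∈ Set.Icc (α i) (β i)) {t : ℝ}
    (ht : t ∈ Set.Icc (α j) (β j)) : Function.update x j t ∈ cyl α β T := by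
  intro i hi
  by_cases h : i = j
  · subst h; simpa using ht
  · simpa [h] using hx i hi h

lemma hasDeriv_line {n : ℕ} {α β : Fin n → ℝ} {T : Finset (Fin n)}
    {f : (Fin n → ℝ) → ℂ}
    (hf : ContDiffOn ℝ (⊤ : ℕ∞) f (cyl α β T)) {j : Fin n} {x : Fin n → ℝ}
    (hx : x ∈ cyl α β T) {t : ℝ} (ht : t ∈ Set.Icc (α j) (β j)) :
    HasDerivWithinAt (fun t => f (Function.update x j t))
      (fderivWithin ℝ f (cyl α β T) (Function.update x j t) (Pi.single j 1))
      (Set.Icc (α j) (β j)) t := by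
  have hmem : Function.update x j t ∈ cyl α β T := update_mem_cyl' (fun i hi _ => hx i hi) ht
  have h1 : HasFDerivWithinAt f (fderivWithin ℝ f (cyl α β T) (Function.update x j t))
      (cyl α β T) (Function.update x j t) :=
    (hf.differentiableOn (by simp) _ hmem).hasFDerivWithinAt
  have h2 := (hasDerivAt_update x j t).hasDerivWithinAt (s := Set.Icc (α j) (β j))
  exact h1.comp_hasDerivWithinAt t h2
    (fun s hs => update_mem_cyl' (fun i hi _ => hx i hi) hs)

lemma pderivI_eq {n : ℕ} {α β : Fin n → ℝ} {T : Finset (Fin n)}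
    (hT : ∀ j ∈ T, α j < β j) {f : (Fin n → ℝ) → ℂ}
    (hf : ContDiffOn ℝ (⊤ : ℕ∞) f (cyl α β T)) {j : Fin n} (hj : j ∈ T) {x : Fin n → ℝ}
    (hx : x ∈ cyl α β T) :
    pderivI (α j) (β j) j f x = fderivWithin ℝ f (cyl α β T) x (Pi.single j 1) := by
  have h := hasDeriv_line hf hx (hx j hj)
  rw [Function.update_eq_self] at h
  exact h.derivWithin (uniqueDiffOn_Icc (hT j hj) _ (hx j hj))

lemma pderivI_contDiffOn {n : ℕ} {α β : Fin n → ℝ} {T : Finset (Fin n)}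
    (hT : ∀ j ∈ T, α j < β j) {f : (Fin n → ℝ) → ℂ}
    (hf : ContDiffOn ℝ (⊤ : ℕ∞) f (cyl α β T)) {j : Fin n} (hj : j ∈ T) :
    ContDiffOn ℝ (⊤ : ℕ∞) (pderivI (α j) (β j) j f) (cyl α β T) := by
  have h := (hf.fderivWithin (m := (⊤ : ℕ∞)) (cyl_uniqueDiffOn α β T hT) (by simp))
  exact (h.clm_apply (contDiffOn_const (c := Pi.single j (1 : ℝ)))).congr
    fun x hx => pderivI_eq hT hf hj hx

lemma mixedDeriv_contDiffOn {n : ℕ} {α β : Fin n → ℝ} {T s : Finset (Fin n)}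
    (hT : ∀ j ∈ T, α j < β j) {f : (Fin n → ℝ) → ℂ}
    (hf : ContDiffOn ℝ (⊤ : ℕ∞) f (cyl α β T)) (hs : s ⊆ T) :
    ContDiffOn ℝ (⊤ : ℕ∞) (mixedDeriv α β s f) (cyl α β T) := by
  unfold mixedDeriv
  have : ∀ j ∈ s.sort (· ≤ ·), j ∈ T := fun j hj => hs (by simpa using hj)
  revert this
  generalize s.sort (· ≤ ·) = l
  intro hl
  induction l with
  | nil => simpa using hf
  | cons j l ih =>
    simp only [List.foldr_cons]
    exact pderivI_contDiffOn hT (ih fun i hi => hl i (List.mem_cons_of_mem _ hi))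
      (hl j List.mem_cons_self)

lemma mixedDeriv_update {n : ℕ} {α β : Fin n → ℝ} {s : Finset (Fin n)}
    (f : (Fin n → ℝ) → ℂ) {j : Fin n} (hj : j ∉ s) (t : ℝ) (x : Fin n → ℝ) :
    mixedDeriv α β s f (Function.update x j t)
      = mixedDeriv α β s (fun y => f (Function.update y j t)) x := by
  unfold mixedDeriv
  have : ∀ i ∈ s.sort (· ≤ ·), i ≠ j := fun i hi h => hj (by subst h; simpa using hi)
  revert this
  generalize s.sort (· ≤ ·) = l
  intro hl
  induction l generalizing x with
  | nil => rfl
  | cons i l ih =>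
    have hij : i ≠ j := hl i List.mem_cons_self
    simp only [List.foldr_cons]
    unfold pderivI
    rw [Function.update_of_ne hij]
    congr 1
    ext u
    rw [Function.update_comm hij.symm]
    exact ih _ (fun k hk => hl k (List.mem_cons_of_mem _ hk))

lemma mixedDeriv_insert {n : ℕ} {α β : Fin n → ℝ} {s : Finset (Fin n)}
    (f : (Fin n → ℝ) → ℂ) {j : Fin n} (hj : ∀ i ∈ s, j < i) :
    mixedDeriv α β (insert j s) f = pderivI (α j) (β j) j (mixedDeriv α β s f) := by
  unfold mixedDeriv
  rw [Finset.sort_insert _ (fun i hi => (hj i hi).le) (fun h => lt_irrefl _ (hj j h))]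
  rfl

lemma measurable_extendA {n : ℕ} (s : Finset (Fin n)) : Measurable (extendA s) := by
  refine measurable_pi_lambda _ fun i => ?_
  unfold extendA
  split_ifs with h
  · exact measurable_pi_apply _
  · exact measurable_const

lemma continuous_extendA {n : ℕ} (s : Finset (Fin n)) : Continuous (extendA s) := by
  refine continuous_pi fun i => ?_
  unfold extendA
  split_ifs with h
  · exact continuous_apply _
  · exact continuous_const

/-- splitting off one coordinate -/
def splitEquiv {n : ℕ} (s : Finset (Fin n)) (j : Fin n) (hj : j ∉ s) :
    (({i // i ∈ s} → ℝ) × ℝ) ≃ᵐ ({i // i ∈ insert j s} → ℝ) where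
  toFun p := fun i => Function.update (extendA s p.1) j p.2 i.1
  invFun x := (fun i => x ⟨i.1, Finset.mem_insert_of_mem i.2⟩, x ⟨j, Finset.mem_insert_self _ _⟩)
  left_inv p := by
    refine Prod.ext ?_ ?_
    · funext i
      have : i.1 ≠ j := fun h => hj (h ▸ i.2)
      simp [this, extendA]
    · simp
  right_inv x := by
    funext i
    obtain ⟨i, hi⟩ := i
    by_cases h : i = j
    · subst h; simp
    · have : i ∈ s := (Finset.mem_insert.1 hi).resolve_left h
      simp [h, extendA, this]
  measurable_toFun := by
    refine measurable_pi_lambda _ fun i => ?_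
    by_cases h : i.1 = j
    · simp only [h, Function.update_self, Equiv.coe_fn_mk]; exact measurable_snd
    · simp only [ne_eq, h, not_false_eq_true, Function.update_of_ne, Equiv.coe_fn_mk]
      exact (measurable_pi_iff.1 (measurable_extendA s) i.1).comp measurable_fst
  measurable_invFun := by
    refine Measurable.prodMk (measurable_pi_lambda _ fun i => measurable_pi_apply _)
      (measurable_pi_apply _)

lemma splitEquiv_apply {n : ℕ} (s : Finset (Fin n)) (j : Fin n) (hj : j ∉ s)
    (p : ({i // i ∈ s} → ℝ) × ℝ) (i : {i // i ∈ insert j s}) :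
    splitEquiv s j hj p i = Function.update (extendA s p.1) j p.2 i.1 := rfl

lemma splitEquiv_preimage {n : ℕ} (s : Finset (Fin n)) (j : Fin n) (hj : j ∉ s)
    (K : {i // i ∈ insert j s} → Set ℝ) :
    splitEquiv s j hj ⁻¹' (Set.univ.pi K)
      = (Set.univ.pi fun i : {i // i ∈ s} => K ⟨i.1, Finset.mem_insert_of_mem i.2⟩) ×ˢ
          K ⟨j, Finset.mem_insert_self _ _⟩ := by
  ext p
  simp only [Set.mem_preimage, Set.mem_pi, Set.mem_univ, true_imp_iff, Set.mem_prod,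
    splitEquiv_apply]
  constructor
  · intro h
    refine ⟨fun i => ?_, ?_⟩
    · have := h ⟨i.1, Finset.mem_insert_of_mem i.2⟩
      have hij : i.1 ≠ j := fun h => hj (h ▸ i.2)
      simpa [hij, extendA] using this
    · simpa using h ⟨j, Finset.mem_insert_self _ _⟩
  · rintro ⟨h1, h2⟩ ⟨i, hi⟩
    by_cases h : i = j
    · subst h; simpa using h2
    · have : i ∈ s := (Finset.mem_insert.1 hi).resolve_left h
      simpa [h, extendA, this] using h1 ⟨i, this⟩

lemma splitEquiv_mp {n : ℕ} (s : Finset (Fin n)) (j : Fin n) (hj : j ∉ s) :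
    MeasurePreserving (splitEquiv s j hj) volume volume := by
  refine ⟨(splitEquiv s j hj).measurable, ?_⟩
  rw [volume_pi]
  refine (Measure.pi_eq fun K hK => ?_).symm
  rw [(splitEquiv s j hj).map_apply, splitEquiv_preimage, Measure.volume_eq_prod,
    Measure.prod_prod, volume_pi, Measure.pi_pi]
  rw [← Finset.attach_eq_univ, ← Finset.attach_eq_univ, Finset.attach_insert,
    Finset.prod_insert, mul_comm, Finset.prod_image]
  · intro x _ y _ h
    exact Subtype.ext (congrArg (fun z : {i // i ∈ insert j s} => z.1) h)
  · simp only [Finset.mem_image, Finset.mem_attach, true_and, not_exists, Subtype.mk.injEq]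
    intro x h
    exact hj (h ▸ x.2)

lemma integral_insert {n : ℕ} (s : Finset (Fin n)) (j : Fin n) (hj : j ∉ s)
    (K : Fin n → Set ℝ) (F : (Fin n → ℝ) → ℂ) :
    ∫ x : {i // i ∈ insert j s} → ℝ in Set.univ.pi (fun i => K i.1), F (extendA (insert j s) x)
      = ∫ p : ({i // i ∈ s} → ℝ) × ℝ in (Set.univ.pi (fun i => K i.1)) ×ˢ K j,
          F (Function.update (extendA s p.1) j p.2) := by
  have h := (splitEquiv_mp s j hj).setIntegral_preimage_emb
    (splitEquiv s j hj).measurableEmbedding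
    (fun x => F (extendA (insert j s) x)) (Set.univ.pi (fun i => K i.1))
  rw [← h, splitEquiv_preimage]
  congr 1
  ext p
  congr 1
  ext i
  unfold extendA
  by_cases hi : i = j
  · subst hi; simp [splitEquiv_apply]
  · by_cases his : i ∈ s <;> simp [splitEquiv_apply, hi, his, extendA]

lemma ftc_box {n : ℕ} {α β c : Fin n → ℝ} (s : Finset (Fin n)) :
    (∀ j ∈ s, α j < β j) → (∀ j ∈ s, α j ≤ c j ∧ c j ≤ β j) →
    ∀ f : (Fin n → ℝ) → ℂ, ContDiffOn ℝ (⊤ : ℕ∞) f (cyl α β s) →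
    ∫ x : {i // i ∈ s} → ℝ in Set.univ.pi (fun i => Set.Icc (c i.1) (β i.1)),
        mixedDeriv α β s f (extendA s x)
      = ∑ C ∈ s.powerset, (-1 : ℂ) ^ C.card *
          f (fun j => if j ∈ C then c j else if j ∈ s then β j else 0) := by
  induction s using Finset.induction_on_min with
  | empty =>
    intro _ _ f _
    have h0 : ∀ x, extendA (∅ : Finset (Fin n)) x = fun _ => 0 := by
      intro x; funext i; simp [extendA]
    have h1 : (Set.univ.pi (fun i : {i // i ∈ (∅ : Finset (Fin n))} => Set.Icc (c i.1) (β i.1)))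
        = Set.univ := by
      ext x
      simp only [Set.mem_pi, Set.mem_univ, true_imp_iff, iff_true]
      rintro ⟨i, hi⟩
      simp at hi
    simp only [h0, h1]
    simp [mixedDeriv, Measure.volume_pi_eq_dirac (0 : {i : Fin n // i ∈ (∅ : Finset (Fin n))} → ℝ)]
  | insert j s hjs ih =>
    intro hT hc f hf
    have hj : j ∉ s := fun h => lt_irrefl _ (hjs j h)
    have hsT : ∀ i ∈ s, α i < β i := fun i hi => hT i (Finset.mem_insert_of_mem hi)
    have hsc : ∀ i ∈ s, α i ≤ c i ∧ c i ≤ β i := fun i hi => hc i (Finset.mem_insert_of_mem hi)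
    obtain ⟨hcα, hcβ⟩ := hc j (Finset.mem_insert_self _ _)
    set M := mixedDeriv α β s f with hM
    have hMc : ContDiffOn ℝ (⊤ : ℕ∞) M (cyl α β (insert j s)) :=
      mixedDeriv_contDiffOn hT hf (Finset.subset_insert _ _)
    have hPc := pderivI_contDiffOn hT hMc (Finset.mem_insert_self j s)
    have hmem : ∀ x : {i // i ∈ s} → ℝ, x ∈ Set.univ.pi (fun i : {i // i ∈ s} =>
        Set.Icc (c i.1) (β i.1)) → ∀ t ∈ Set.Icc (α j) (β j),
        Function.update (extendA s x) j t ∈ cyl α β (insert j s) := by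
      intro x hx t ht
      refine update_mem_cyl' (fun i hi hij => ?_) ht
      have his : i ∈ s := (Finset.mem_insert.1 hi).resolve_left hij
      have := hx ⟨i, his⟩ trivial
      simp only [extendA, his, dite_true]
      exact ⟨(hsc i his).1.trans this.1, this.2⟩
    have hupd : Continuous fun p : ({i // i ∈ s} → ℝ) × ℝ =>
        Function.update (extendA s p.1) j p.2 :=
      ((continuous_extendA s).comp continuous_fst).update j continuous_snd
    have hsub : Set.Icc (c j) (β j) ⊆ Set.Icc (α j) (β j) := Set.Icc_subset_Icc_left hcα
    rw [mixedDeriv_insert f hjs, integral_insert s j hj (fun i => Set.Icc (c i) (β i))]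
    rw [Measure.volume_eq_prod, setIntegral_prod]
    swap
    · refine ContinuousOn.integrableOn_compact
        ((isCompact_univ_pi fun i => isCompact_Icc).prod isCompact_Icc) ?_
      exact hPc.continuousOn.comp hupd.continuousOn
        (fun p hp => hmem p.1 hp.1 p.2 (hsub hp.2))
    have key : ∀ x ∈ Set.univ.pi (fun i : {i // i ∈ s} => Set.Icc (c i.1) (β i.1)),
        ∫ t in Set.Icc (c j) (β j), pderivI (α j) (β j) j M (Function.update (extendA s x) j t)
          = mixedDeriv α β s (fun y => f (Function.update y j (β j))) (extendA s x)
            - mixedDeriv α β s (fun y => f (Function.update y j (c j))) (extendA s x) := by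
      intro x hx
      rw [← mixedDeriv_update f hj, ← mixedDeriv_update f hj, integral_Icc_eq_integral_Ioc,
        ← intervalIntegral.integral_of_le hcβ]
      have hline : Continuous fun t : ℝ => Function.update (extendA s x) j t :=
        continuous_const.update j continuous_id
      refine intervalIntegral.integral_eq_sub_of_hasDerivAt_of_le hcβ
        (f := fun t => M (Function.update (extendA s x) j t)) ?_ ?_ ?_
      · exact hMc.continuousOn.comp hline.continuousOn (fun t ht => hmem x hx t (hsub ht))
      · intro t ht
        have htI : t ∈ Set.Icc (α j) (β j) := hsub ⟨ht.1.le, ht.2.le⟩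
        have h1 := hasDeriv_line hMc (hmem x hx t htI) htI
        rw [pderivI_eq hT hMc (Finset.mem_insert_self _ _) (hmem x hx t htI)]
        simp only [Function.update_idem] at h1
        exact h1.hasDerivAt (Icc_mem_nhds (hcα.trans_lt ht.1) ht.2)
      · refine ContinuousOn.intervalIntegrable ?_
        rw [Set.uIcc_of_le hcβ]
        exact hPc.continuousOn.comp hline.continuousOn (fun t ht => hmem x hx t (hsub ht))
    have hcd : ∀ t ∈ Set.Icc (α j) (β j),
        ContDiffOn ℝ (⊤ : ℕ∞) (fun y => f (Function.update y j t)) (cyl α β s) := by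
      intro t ht
      refine hf.comp (t := cyl α β (insert j s)) (ContDiff.contDiffOn ?_) ?_
      · rw [contDiff_pi]
        intro i
        by_cases h : i = j
        · subst h; simpa using contDiff_const
        · simpa [h] using contDiff_apply ℝ ℝ i
      · intro y hy
        exact update_mem_cyl' (fun i hi hij => hy i ((Finset.mem_insert.1 hi).resolve_left hij)) ht
    have hβI : β j ∈ Set.Icc (α j) (β j) := ⟨hcα.trans hcβ, le_rfl⟩
    have hcI : c j ∈ Set.Icc (α j) (β j) := ⟨hcα, hcβ⟩
    have hint : ∀ t ∈ Set.Icc (α j) (β j), IntegrableOn (fun x : {i // i ∈ s} → ℝ =>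
        mixedDeriv α β s (fun y => f (Function.update y j t)) (extendA s x))
        (Set.univ.pi (fun i : {i // i ∈ s} => Set.Icc (c i.1) (β i.1))) := by
      intro t ht
      refine ContinuousOn.integrableOn_compact (isCompact_univ_pi fun i => isCompact_Icc) ?_
      refine (mixedDeriv_contDiffOn hsT (hcd t ht) subset_rfl).continuousOn.comp
        (continuous_extendA s).continuousOn ?_
      intro x hx i hi
      have := hx ⟨i, hi⟩ trivial
      have hi' : i ∈ s := hi
      simp only [extendA, hi', dite_true]
      exact ⟨(hsc i hi).1.trans this.1, this.2⟩
    rw [setIntegral_congr_fun (MeasurableSet.univ_pi fun i => measurableSet_Icc) key,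
      integral_sub (hint _ hβI) (hint _ hcI), ih hsT hsc _ (hcd _ hβI), ih hsT hsc _ (hcd _ hcI),
      Finset.sum_powerset_insert hj, sub_eq_add_neg, ← Finset.sum_neg_distrib]
    congr 1
    · refine Finset.sum_congr rfl fun C hC => ?_
      have hjC : j ∉ C := fun h => hj (Finset.mem_powerset.1 hC h)
      congr 2
      ext i
      by_cases h : i = j
      · subst h; simp [hjC]
      · simp [h]
    · refine Finset.sum_congr rfl fun C hC => ?_
      have hjC : j ∉ C := fun h => hj (Finset.mem_powerset.1 hC h)
      rw [Finset.card_insert_of_notMem hjC, pow_succ, mul_neg_one, neg_mul]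
      congr 3
      ext i
      by_cases h : i = j
      · subst h; simp
      · simp [h]

lemma prod_split {n : ℕ} (F : Fin n → ℂ) (A B : Finset (Fin n))
    (hB : B ⊆ Finset.univ \ A) :
    ∏ j, F j = (∏ j ∈ A, F j) * ((∏ j ∈ B, F j) * ∏ j ∈ (Finset.univ \ A) \ B, F j) := by
  rw [mul_comm (∏ j ∈ B, F j), Finset.prod_sdiff hB, mul_comm,
    Finset.prod_sdiff (Finset.subset_univ A)]

/-- the evaluation points -/
def evPt {n : ℕ} (α β c : Fin n → ℝ) (A B C : Finset (Fin n)) : Fin n → ℝ :=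
  embedI α β A B (fun j => if j ∈ C then c j else if j ∈ A then β j else 0)

lemma comb_prod {n : ℕ} (α β c p : Fin n → ℝ) (u v ω : Fin n → ℂ) (h : Fin n → ℝ → ℂ)
    (hid : ∀ j, u j * (h j (β j) - h j (c j)) + (-(u j * h j (β j)) + v j * h j (α j))
      = -(ω j * h j (p j))) :
    ∑ A ∈ (Finset.univ : Finset (Fin n)).powerset,
      ∑ B ∈ ((Finset.univ : Finset (Fin n)) \ A).powerset,
        (-1 : ℂ) ^ B.card * (((∏ j ∈ A, u j) * ((∏ j ∈ B, u j) *
          ∏ j ∈ (Finset.univ \ A) \ B, v j)) *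
            ∑ C ∈ A.powerset, (-1 : ℂ) ^ C.card * ∏ j, h j (evPt α β c A B C j))
      = (-1 : ℂ) ^ n * ((∏ j, ω j) * ∏ j, h j (p j)) := by
  have hR : (-1 : ℂ) ^ n * ((∏ j, ω j) * ∏ j, h j (p j)) = ∏ j, -(ω j * h j (p j)) := by
    rw [Finset.prod_neg, Finset.prod_mul_distrib]; simp
  rw [hR, ← Finset.prod_congr rfl fun j _ => hid j, Finset.prod_add]
  refine Finset.sum_congr rfl fun A _ => ?_
  rw [Finset.prod_add, Finset.mul_sum]
  refine Finset.sum_congr rfl fun B hB => ?_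
  have hB' := Finset.mem_powerset.1 hB
  have hBA : ∀ j ∈ B, j ∉ A := fun j hj => (Finset.mem_sdiff.1 (hB' hj)).2
  have hC : ∑ C ∈ A.powerset, (-1 : ℂ) ^ C.card * ∏ j, h j (evPt α β c A B C j)
      = (∏ j ∈ A, (h j (β j) - h j (c j))) * ((∏ j ∈ B, h j (β j)) *
          ∏ j ∈ (Finset.univ \ A) \ B, h j (α j)) := by
    have : ∏ j ∈ A, (h j (β j) - h j (c j)) = ∏ j ∈ A, (-(h j (c j)) + h j (β j)) :=
      Finset.prod_congr rfl fun j _ => by ring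
    rw [this, Finset.prod_add, Finset.sum_mul]
    refine Finset.sum_congr rfl fun C hC => ?_
    have hC' := Finset.mem_powerset.1 hC
    rw [prod_split _ A B hB', ← Finset.prod_sdiff hC', Finset.prod_neg]
    have e1 : ∏ j ∈ A \ C, h j (evPt α β c A B C j) = ∏ j ∈ A \ C, h j (β j) :=
      Finset.prod_congr rfl fun j hj => by
        have := Finset.mem_sdiff.1 hj
        simp [evPt, embedI, this.1, this.2]
    have e2 : ∏ j ∈ C, h j (evPt α β c A B C j) = ∏ j ∈ C, h j (c j) :=
      Finset.prod_congr rfl fun j hj => by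
        simp [evPt, embedI, hj, hC' hj]
    have e3 : ∏ j ∈ B, h j (evPt α β c A B C j) = ∏ j ∈ B, h j (β j) :=
      Finset.prod_congr rfl fun j hj => by
        simp [evPt, embedI, hj, hBA j hj]
    have e4 : ∏ j ∈ (Finset.univ \ A) \ B, h j (evPt α β c A B C j)
        = ∏ j ∈ (Finset.univ \ A) \ B, h j (α j) :=
      Finset.prod_congr rfl fun j hj => by
        have h1 := Finset.mem_sdiff.1 hj
        have h2 := (Finset.mem_sdiff.1 h1.1).2
        simp [evPt, embedI, h1.2, h2]
    rw [e1, e2, e3, e4]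
    ring
  rw [hC, Finset.prod_mul_distrib, Finset.prod_neg, Finset.prod_mul_distrib,
    Finset.prod_mul_distrib]
  ring

lemma comb_gen {n : ℕ} (α β c p : Fin n → ℝ) (u v ω : Fin n → ℂ)
    (hid : ∀ j (h : ℝ → ℂ), u j * (h (β j) - h (c j)) + (-(u j * h (β j)) + v j * h (α j))
      = -(ω j * h (p j))) (G : (Fin n → ℝ) → ℂ) :
    ∑ A ∈ (Finset.univ : Finset (Fin n)).powerset,
      ∑ B ∈ ((Finset.univ : Finset (Fin n)) \ A).powerset,
        (-1 : ℂ) ^ B.card * (((∏ j ∈ A, u j) * ((∏ j ∈ B, u j) *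
          ∏ j ∈ (Finset.univ \ A) \ B, v j)) *
            ∑ C ∈ A.powerset, (-1 : ℂ) ^ C.card * G (evPt α β c A B C))
      = (-1 : ℂ) ^ n * ((∏ j, ω j) * G p) := by
  classical
  set Q : Finset (Fin n → ℝ) := Fintype.piFinset (fun j => {α j, β j, c j, p j}) with hQ
  have hG : ∀ y ∈ Q, G y = ∑ q ∈ Q, G q * ∏ j, (fun t : ℝ => if t = q j then (1 : ℂ) else 0) (y j) := by
    intro y hy
    rw [Finset.sum_eq_single y]
    · simp
    · intro q _ hqy
      obtain ⟨j, hj⟩ := Function.ne_iff.1 hqy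
      rw [Finset.prod_eq_zero (Finset.mem_univ j) (by simp [hj.symm]), mul_zero]
    · exact fun h => absurd hy h
  have hpQ : p ∈ Q := by simp [hQ]
  have hevQ : ∀ A B C, C ∈ A.powerset → evPt α β c A B C ∈ Q := by
    intro A B C _
    simp only [hQ, Fintype.mem_piFinset]
    intro j
    simp only [evPt, embedI]
    split_ifs <;> simp_all
  have hsum : ∀ A B, ∑ C ∈ A.powerset, (-1 : ℂ) ^ C.card * G (evPt α β c A B C)
      = ∑ q ∈ Q, G q * ∑ C ∈ A.powerset, (-1 : ℂ) ^ C.card *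
        ∏ j, (fun t : ℝ => if t = q j then (1 : ℂ) else 0) (evPt α β c A B C j) := by
    intro A B
    simp_rw [Finset.mul_sum]
    rw [Finset.sum_comm]
    refine Finset.sum_congr rfl fun C hC => ?_
    rw [hG _ (hevQ A B C hC), Finset.mul_sum]
    exact Finset.sum_congr rfl fun q _ => by ring
  have hterm : ∀ (w : ℂ) (k : ℕ) (A B : Finset (Fin n)),
      (-1 : ℂ) ^ k * (w * ∑ C ∈ A.powerset, (-1 : ℂ) ^ C.card * G (evPt α β c A B C))
      = ∑ q ∈ Q, G q * ((-1 : ℂ) ^ k * (w * ∑ C ∈ A.powerset, (-1 : ℂ) ^ C.card *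
        ∏ j, (fun t : ℝ => if t = q j then (1 : ℂ) else 0) (evPt α β c A B C j))) := by
    intro w k A B
    rw [hsum, Finset.mul_sum, Finset.mul_sum]
    exact Finset.sum_congr rfl fun q _ => by ring
  rw [Finset.sum_congr rfl fun A _ => Finset.sum_congr rfl fun B _ => hterm _ _ A B]
  rw [Finset.sum_congr rfl fun A _ => Finset.sum_comm, Finset.sum_comm]
  rw [hG p hpQ, Finset.mul_sum, Finset.mul_sum]
  refine Finset.sum_congr rfl fun q _ => ?_
  simp only [← Finset.mul_sum]
  have := comb_prod α β c p u v ω (fun j t => if t = q j then (1 : ℂ) else 0)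
      (fun j => hid j (fun t => if t = q j then (1 : ℂ) else 0))
  rw [this]
  ring

lemma sum_deg {n : ℕ} (α β c : Fin n → ℝ) (A B : Finset (Fin n)) (j : Fin n) (hj : j ∈ A)
    (hc : c j = β j) (G : (Fin n → ℝ) → ℂ) :
    ∑ C ∈ A.powerset, (-1 : ℂ) ^ C.card * G (evPt α β c A B C) = 0 := by
  have hj' : j ∉ A.erase j := Finset.notMem_erase j A
  conv_lhs => rw [← Finset.insert_erase hj]
  rw [Finset.sum_powerset_insert hj', ← Finset.sum_add_distrib]
  refine Finset.sum_eq_zero fun C hC => ?_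
  have hjC : j ∉ C := fun h => hj' (Finset.mem_powerset.1 hC h)
  rw [Finset.card_insert_of_notMem hjC, Finset.insert_erase hj]
  have : evPt α β c A B (insert j C) = evPt α β c A B C := by
    ext i
    by_cases h : i = j
    · subst h; simp [evPt, embedI, hj, hjC, hc]
    · simp [evPt, embedI, h]
  rw [this]; ring

lemma contDiffOn_embed {n : ℕ} {α β : Fin n → ℝ} (hαβ : ∀ j, α j ≤ β j)
    {g : (Fin n → ℝ) → ℂ}
    (hg : ContDiffOn ℝ (⊤ : ℕ∞) g (Set.univ.pi fun j => Set.Icc (α j) (β j)))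
    (A B : Finset (Fin n)) :
    ContDiffOn ℝ (⊤ : ℕ∞) (fun y => g (embedI α β A B y)) (cyl α β A) := by
  refine hg.comp (t := Set.univ.pi fun j => Set.Icc (α j) (β j)) (ContDiff.contDiffOn ?_) ?_
  · rw [contDiff_pi]
    intro i
    unfold embedI
    split_ifs
    · exact contDiff_apply ℝ ℝ i
    · exact contDiff_const
    · exact contDiff_const
  · intro y hy i _
    simp only [embedI]
    split_ifs with h1 h2
    · exact hy i h1
    · exact ⟨hαβ i, le_rfl⟩
    · exact ⟨le_rfl, hαβ i⟩

lemma term_eval {n : ℕ} {α β : Fin n → ℝ} (hαβ : ∀ j, α j ≤ β j)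
    {g : (Fin n → ℝ) → ℂ}
    (hg : ContDiffOn ℝ (⊤ : ℕ∞) g (Set.univ.pi fun j => Set.Icc (α j) (β j)))
    (A B : Finset (Fin n)) (hB : B ⊆ Finset.univ \ A) (m : Fin n → ℕ) :
    let F : ({j // j ∈ A} → ℝ) → ℂ := fun x =>
      mixedDeriv α β A (fun y => g (embedI α β A B y)) (extendA A x) *
        ∏ j, if (m j : ℝ) ≤ embedI (fun j => α j - 1) β A B (extendA A x) j then (1 : ℂ) else 0
    IntegrableOn F (Set.univ.pi fun j : {j // j ∈ A} => Set.Icc (α j.1) (β j.1)) ∧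
    ∫ x in Set.univ.pi fun j : {j // j ∈ A} => Set.Icc (α j.1) (β j.1), F x
      = ((∏ j ∈ A, if (m j : ℝ) ≤ β j then (1 : ℂ) else 0) *
          ((∏ j ∈ B, if (m j : ℝ) ≤ β j then (1 : ℂ) else 0) *
          ∏ j ∈ (Finset.univ \ A) \ B, if (m j : ℝ) ≤ α j - 1 then (1 : ℂ) else 0)) *
        ∑ C ∈ A.powerset, (-1 : ℂ) ^ C.card *
          g (evPt α β (fun j => max (m j : ℝ) (α j)) A B C) := by
  intro F
  set box := Set.univ.pi fun j : {j // j ∈ A} => Set.Icc (α j.1) (β j.1) with hbox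
  have hBA : ∀ j ∈ B, j ∉ A := fun j hj => (Finset.mem_sdiff.1 (hB hj)).2
  by_cases hdeg : ∃ j ∈ A, α j = β j
  · obtain ⟨j, hjA, hj⟩ := hdeg
    have h0 : volume box = 0 := by
      rw [hbox, volume_pi_pi]
      exact Finset.prod_eq_zero (Finset.mem_univ ⟨j, hjA⟩) (by simp [hj])
    have h0' : volume.restrict box = 0 := by rwa [Measure.restrict_eq_zero]
    refine ⟨by simp [IntegrableOn, h0'], ?_⟩
    rw [h0', integral_zero_measure]
    by_cases hm : (m j : ℝ) ≤ β j
    · rw [sum_deg α β _ A B j hjA (by simp only [hj]; exact max_eq_right hm), mul_zero]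
    · rw [Finset.prod_eq_zero hjA (by simp [hm])]; simp
  have hlt : ∀ j ∈ A, α j < β j := fun j hj =>
    lt_of_le_of_ne (hαβ j) fun h => hdeg ⟨j, hj, h⟩
  set K : ℂ := (∏ j ∈ B, if (m j : ℝ) ≤ β j then (1 : ℂ) else 0) *
          ∏ j ∈ (Finset.univ \ A) \ B, if (m j : ℝ) ≤ α j - 1 then (1 : ℂ) else 0 with hK
  set U : Set ({j // j ∈ A} → ℝ) := Set.univ.pi fun j => Set.Ici (m j.1 : ℝ) with hU
  have hUm : MeasurableSet U := MeasurableSet.univ_pi fun j => measurableSet_Ici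
  set M : ({j // j ∈ A} → ℝ) → ℂ := fun x =>
    mixedDeriv α β A (fun y => g (embedI α β A B y)) (extendA A x) with hM
  have hF : F = fun x => K * U.indicator M x := by
    funext x
    simp only [F]
    rw [prod_split _ A B hB]
    have e3 : (∏ j ∈ B, if (m j : ℝ) ≤ embedI (fun j => α j - 1) β A B (extendA A x) j
        then (1 : ℂ) else 0) = ∏ j ∈ B, if (m j : ℝ) ≤ β j then (1 : ℂ) else 0 :=
      Finset.prod_congr rfl fun j hj => by
        simp [embedI, hj, hBA j hj]
    have e4 : (∏ j ∈ (Finset.univ \ A) \ B,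
        if (m j : ℝ) ≤ embedI (fun j => α j - 1) β A B (extendA A x) j
        then (1 : ℂ) else 0)
        = ∏ j ∈ (Finset.univ \ A) \ B, if (m j : ℝ) ≤ α j - 1 then (1 : ℂ) else 0 :=
      Finset.prod_congr rfl fun j hj => by
        have h1 := Finset.mem_sdiff.1 hj
        have h2 := (Finset.mem_sdiff.1 h1.1).2
        simp only [embedI, h1.2, h2, if_false]
    rw [e3, e4, ← hK]
    by_cases hx : x ∈ U
    · rw [Set.indicator_of_mem hx, Finset.prod_eq_one]
      · ring
      · intro j hj
        have : (m j : ℝ) ≤ x ⟨j, hj⟩ := hx ⟨j, hj⟩ trivial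
        simp [embedI, extendA, hj, this]
    · rw [Set.indicator_of_notMem hx]
      have : ∃ j : {j // j ∈ A}, ¬ (m j.1 : ℝ) ≤ x j := by
        by_contra hcon
        push Not at hcon
        exact hx fun j _ => hcon j
      obtain ⟨⟨j, hj⟩, hjx⟩ := this
      rw [Finset.prod_eq_zero hj]
      · ring
      · simp only [embedI, extendA, hj, if_true, dite_true, hjx, if_false]
  have hcd := contDiffOn_embed hαβ hg A B
  have hMi : IntegrableOn M box := by
    refine ContinuousOn.integrableOn_compact (isCompact_univ_pi fun i => isCompact_Icc) ?_
    refine (mixedDeriv_contDiffOn hlt hcd subset_rfl).continuousOn.comp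
      (continuous_extendA A).continuousOn ?_
    intro x hx i hi
    have := hx ⟨i, hi⟩ trivial
    have hi' : i ∈ A := hi
    simp only [extendA, hi', dite_true]
    exact this
  refine ⟨?_, ?_⟩
  · rw [hF]
    exact (hMi.indicator hUm).const_mul K
  rw [hF, integral_const_mul, setIntegral_indicator hUm]
  by_cases hm : ∀ j ∈ A, (m j : ℝ) ≤ β j
  · have hset : box ∩ U = Set.univ.pi fun j : {j // j ∈ A} =>
        Set.Icc (max (m j.1 : ℝ) (α j.1)) (β j.1) := by
      rw [hbox, hU, ← Set.pi_inter_distrib]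
      congr 1
      ext j t
      simp only [Set.mem_inter_iff, Set.mem_Icc, Set.mem_Ici, max_le_iff]
      tauto
    rw [hset, Finset.prod_eq_one (fun j hj => by simp [hm j hj]), one_mul]
    congr 1
    exact ftc_box (c := fun j => max (m j : ℝ) (α j)) A hlt
      (fun j hj => ⟨le_max_right _ _, max_le (hm j hj) (hαβ j)⟩) _ hcd
  · push Not at hm
    obtain ⟨j, hj, hjm⟩ := hm
    have hset : box ∩ U = ∅ := by
      ext x
      simp only [Set.mem_inter_iff, Set.mem_empty_iff_false, iff_false, not_and]
      intro h1 h2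
      exact absurd ((h2 ⟨j, hj⟩ trivial).trans (h1 ⟨j, hj⟩ trivial).2) (not_le.2 hjm)
    rw [hset, Finset.prod_eq_zero hj (by simp [hjm])]
    simp

lemma partialSum_eq {n : ℕ} (β : Fin n → ℤ) (a : (Fin n → ℕ) → ℂ) (X : Fin n → ℝ)
    (hX : ∀ j, X j ≤ β j) :
    partialSum a X = ∑ m ∈ Fintype.piFinset (fun j => Finset.range (β j + 1).toNat),
      a m * ∏ j, if (m j : ℝ) ≤ X j then (1 : ℂ) else 0 := by
  have hiff : ∀ (k : ℕ) (y : ℝ), k < (⌊y⌋ + 1).toNat ↔ (k : ℝ) ≤ y := by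
    intro k y
    rw [Int.lt_toNat, Int.lt_add_one_iff, Int.le_floor]
    simp
  have hsub : Fintype.piFinset (fun j => Finset.range (⌊X j⌋ + 1).toNat)
      ⊆ Fintype.piFinset (fun j => Finset.range (β j + 1).toNat) := by
    refine Fintype.piFinset_subset _ _ fun j => Finset.range_mono (Int.toNat_le_toNat ?_)
    have : ⌊X j⌋ ≤ β j := by
      have := Int.floor_le_floor (hX j)
      simpa using this
    omega
  unfold partialSum
  rw [← Finset.sum_subset hsub]
  · refine Finset.sum_congr rfl fun m hm => ?_
    rw [Finset.prod_eq_one, mul_one]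
    intro j _
    have := (hiff _ _).1 (Finset.mem_range.1 (Fintype.mem_piFinset.1 hm j))
    simp [this]
  · intro m _ hm
    have : ∃ j, ¬ (m j : ℝ) ≤ X j := by
      by_contra hcon
      push Not at hcon
      exact hm (Fintype.mem_piFinset.2 fun j => Finset.mem_range.2 ((hiff _ _).2 (hcon j)))
    obtain ⟨j, hj⟩ := this
    rw [Finset.prod_eq_zero (Finset.mem_univ j) (by simp [hj]), mul_zero]

/-- Lemma 2.9 (repeated summation by parts):
`∑_{m₁=α₁}^{β₁} ⋯ ∑_{m_n=α_n}^{β_n} g(m) a(m)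
  = (−1)ⁿ ∑_{A ⊆ N} ∑_{B ⊆ N∖A} (−1)^{|B|} ∫_{∏_{j∈A} [α_j, β_j]} g_{A,B}(x) S_{A,B}(x) dx`,
where `g_{A,B} = ∂^{|A|}(g ∘ I_{A,B})` and `S_{A,B} = S ∘ Ĩ_{A,B}`; for `A = ∅` the
integral is the single value `g_{∅,B} S_{∅,B}` (the empty product measure has mass one). -/
theorem statement_2 (n : ℕ) (hn : 1 ≤ n) (α β : Fin n → ℤ)
    (hα : ∀ j, 0 ≤ α j) (hαβ : ∀ j, α j ≤ β j)
    (g : (Fin n → ℝ) → ℂ)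
    (hg : ContDiffOn ℝ (⊤ : ℕ∞) g (Set.univ.pi fun j => Set.Icc (α j : ℝ) (β j)))
    (a : (Fin n → ℕ) → ℂ) :
    ∑ m ∈ Fintype.piFinset (fun j => Finset.Icc (α j).toNat (β j).toNat),
        g (fun j => (m j : ℝ)) * a m
      = (-1 : ℂ) ^ n *
          ∑ A ∈ (Finset.univ : Finset (Fin n)).powerset,
            ∑ B ∈ ((Finset.univ : Finset (Fin n)) \ A).powerset,
              (-1 : ℂ) ^ B.card *
                ∫ x : {j // j ∈ A} → ℝ in
                    Set.univ.pi (fun j : {j // j ∈ A} => Set.Icc ((α j.1 : ℝ)) ((β j.1 : ℝ))),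
                  mixedDeriv (fun j => (α j : ℝ)) (fun j => (β j : ℝ)) A
                      (fun y => g (embedI (fun j => (α j : ℝ)) (fun j => (β j : ℝ)) A B y))
                      (extendA A x) *
                    partialSum a
                      (embedI (fun j => ((α j : ℝ) - 1)) (fun j => (β j : ℝ)) A B
                        (extendA A x)) := by
  set αr : Fin n → ℝ := fun j => (α j : ℝ) with hαr
  set βr : Fin n → ℝ := fun j => (β j : ℝ) with hβr
  have hle : ∀ j, αr j ≤ βr j := fun j => by simp [hαr, hβr, hαβ j]
  set big := Fintype.piFinset (fun j => Finset.range (β j + 1).toNat) with hbig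
  have hterm : ∀ A ∈ (Finset.univ : Finset (Fin n)).powerset,
      ∀ B ∈ ((Finset.univ : Finset (Fin n)) \ A).powerset,
      (-1 : ℂ) ^ B.card * ∫ x : {j // j ∈ A} → ℝ in
          Set.univ.pi (fun j : {j // j ∈ A} => Set.Icc (αr j.1) (βr j.1)),
        mixedDeriv αr βr A (fun y => g (embedI αr βr A B y)) (extendA A x) *
          partialSum a (embedI (fun j => αr j - 1) βr A B (extendA A x))
      = ∑ m ∈ big, a m * ((-1 : ℂ) ^ B.card * (((∏ j ∈ A, if (m j : ℝ) ≤ βr j then (1 : ℂ) else 0) *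
          ((∏ j ∈ B, if (m j : ℝ) ≤ βr j then (1 : ℂ) else 0) *
          ∏ j ∈ (Finset.univ \ A) \ B, if (m j : ℝ) ≤ αr j - 1 then (1 : ℂ) else 0)) *
        ∑ C ∈ A.powerset, (-1 : ℂ) ^ C.card *
          g (evPt αr βr (fun j => max (m j : ℝ) (αr j)) A B C))) := by
    intro A _ B hB
    have hT := fun m => term_eval hle hg A B (Finset.mem_powerset.1 hB) m
    rw [setIntegral_congr_fun (g := fun x => ∑ m ∈ big, a m *
      (mixedDeriv αr βr A (fun y => g (embedI αr βr A B y)) (extendA A x) *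
        ∏ j, if (m j : ℝ) ≤ embedI (fun j => αr j - 1) βr A B (extendA A x) j then (1 : ℂ) else 0))
      (MeasurableSet.univ_pi fun i => measurableSet_Icc)]
    · rw [integral_finsetSum _ fun m _ => (hT m).1.const_mul (a m), Finset.mul_sum]
      refine Finset.sum_congr rfl fun m _ => ?_
      rw [integral_const_mul, (hT m).2]
      ring
    · intro x hx
      simp only
      rw [partialSum_eq β, Finset.mul_sum]
      · exact Finset.sum_congr rfl fun m _ => by ring
      · intro j
        have h3 := hle j
        simp only [embedI, extendA]
        split_ifs with h1 h2
        · exact (hx ⟨j, h1⟩ trivial).2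
        · exact le_rfl
        · simp only [hαr, hβr] at h3 ⊢; linarith
  rw [Finset.sum_congr rfl fun A hA => Finset.sum_congr rfl fun B hB => hterm A hA B hB]
  rw [Finset.sum_congr rfl fun A hA => Finset.sum_comm, Finset.sum_comm]
  have hcomb : ∀ m : Fin n → ℕ, _ := fun m => comb_gen αr βr
    (fun j => max (m j : ℝ) (αr j)) (fun j => (m j : ℝ))
    (fun j => if (m j : ℝ) ≤ βr j then (1 : ℂ) else 0)
    (fun j => if (m j : ℝ) ≤ αr j - 1 then (1 : ℂ) else 0)
    (fun j => if αr j ≤ (m j : ℝ) ∧ (m j : ℝ) ≤ βr j then (1 : ℂ) else 0)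
    (by
      intro j h
      have h3 := hle j
      by_cases h1 : αr j ≤ (m j : ℝ)
      · have h2 : ¬ (m j : ℝ) ≤ αr j - 1 := by linarith
        simp only [max_eq_left h1, h1, h2, if_false, true_and]
        ring
      · push Not at h1
        have h2 : (m j : ℝ) ≤ αr j - 1 := by
          simp only [hαr] at h1 ⊢
          have h4 : (m j : ℤ) < α j := by exact_mod_cast h1
          have h5 : (m j : ℤ) ≤ α j - 1 := by omega
          exact_mod_cast h5
        have h6 : (m j : ℝ) ≤ βr j := by linarith
        simp only [max_eq_right h1.le, h2, h6, not_le.2 h1, if_true, if_false, false_and]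
        ring) g
  simp only [← Finset.mul_sum]
  rw [Finset.sum_congr rfl fun m _ => congrArg (fun z => a m * z) (hcomb m), Finset.mul_sum]
  have hsq : (-1 : ℂ) ^ n * (-1 : ℂ) ^ n = 1 := by rw [← mul_pow]; simp
  have hiff : ∀ m : Fin n → ℕ,
      m ∈ Fintype.piFinset (fun j => Finset.Icc (α j).toNat (β j).toNat) ↔
        ∀ j, αr j ≤ (m j : ℝ) ∧ (m j : ℝ) ≤ βr j := by
    intro m
    simp only [Fintype.mem_piFinset, Finset.mem_Icc, hαr, hβr]
    refine forall_congr' fun j => and_congr ?_ ?_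
    · rw [Int.toNat_le]; exact_mod_cast Iff.rfl
    · rw [Int.le_toNat ((hα j).trans (hαβ j))]; exact_mod_cast Iff.rfl
  have hsub : Fintype.piFinset (fun j => Finset.Icc (α j).toNat (β j).toNat) ⊆ big := by
    refine Fintype.piFinset_subset _ _ fun j k hk => ?_
    have := (Finset.mem_Icc.1 hk).2
    have h1 := hα j
    have h2 := hαβ j
    rw [Finset.mem_range]
    omega
  rw [← Finset.sum_subset hsub]
  · refine Finset.sum_congr rfl fun m hm => ?_
    rw [Finset.prod_eq_one fun j _ => if_pos ((hiff m).1 hm j)]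
    linear_combination (-(g (fun j => (m j : ℝ)) * a m)) * hsq
  · intro m _ hm
    have : ∃ j, ¬ (αr j ≤ (m j : ℝ) ∧ (m j : ℝ) ≤ βr j) := by
      by_contra hcon
      push Not at hcon
      exact hm ((hiff m).2 fun j => by have := hcon j; tauto)
    obtain ⟨j, hj⟩ := this
    rw [Finset.prod_eq_zero (Finset.mem_univ j) (if_neg hj)]
    ring

end
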